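/- arXiv:2108.07713 — 2 statements merged into one kernel-verified Lean document; each statement's English description precedes it below -/
import Mathlib

section
/- For all positive integers r and m, the equation r(4m-1)/(8m) + 2rm·x² + y² + z² + w² = r has a solution in rational numbers x, y, z, w. -/
/-!
For `m ≠ 0` the equation says that `2rm((4m + 1) - X²)` is a sum of three rational squares, where
`X = 4mx`. More generally, for rational `q, t ≥ 0` some `q(t - x²)` is a sum of three rational
squares. Up to square factors `q = k` and `t = n` are natural numbers not divisible by `4`, and one
of the values `x = 0, 1/3, 2/3` keeps `k(9n - (3x)²)` out of the classes `0, 4` and `7` modulo `8`,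
where the rational three-square theorem applies.

For the latter, Dirichlet's theorem and quadratic reciprocity provide a sum of two squares `b`
(a prime or twice a prime) such that `b ≡ -1` modulo `n` and `n` is a square modulo `b`. Legendre's
theorem on ternary forms, here a pigeonhole argument, then solves `n u² = w² + b v²`.
-/

open scoped NumberTheorySymbols

/-! ### Legendre's equation `a u² = w² + b v²` -/

-- The theorem of Brauer and Reynolds.
theorem exists_ne_zero_map_eq_zero_of_card_lt_prod {ι G : Type*} [Fintype ι] [AddGroup G]
    [Fintype G] (f : (ι → ℤ) →+ G) (B : ι → ℕ) (hB : Fintype.card G < ∏ i, B i) :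
    ∃ x ≠ 0, f x = 0 ∧ ∀ i, |x i| < B i := by
  classical
  let g : (∀ i, Fin (B i)) → G := fun s ↦ f fun i ↦ (s i : ℤ)
  obtain ⟨s, t, hst, hg⟩ := Fintype.exists_ne_map_eq_of_card_lt g (by simpa using hB)
  refine ⟨(fun i ↦ (s i : ℤ)) - fun i ↦ (t i : ℤ), ?_, ?_, fun i ↦ ?_⟩
  · rw [sub_ne_zero]
    exact fun h ↦ hst (funext fun i ↦ Fin.ext (by exact_mod_cast congrFun h i))
  · rw [map_sub, sub_eq_zero]
    exact hg
  · rw [Pi.sub_apply, abs_lt]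
    have := (s i).isLt
    have := (t i).isLt
    omega

-- For `n ≠ 0` the number `(n - 1).sqrt + 1` is the square root of `n` rounded up.
theorem sq_lt_of_abs_lt_sqrt_pred_add_one {n : ℕ} (hn : n ≠ 0) {x : ℤ}
    (hx : |x| < ((n - 1).sqrt + 1 : ℕ)) : x ^ 2 < n := by
  have hle : x.natAbs ≤ (n - 1).sqrt := by
    rw [Int.abs_eq_natAbs] at hx
    omega
  have hsq : x.natAbs ^ 2 < n := by
    have := Nat.le_sqrt'.mp hle
    omega
  rw [← Int.natAbs_sq]
  exact_mod_cast hsq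

theorem mul_lt_mul_sqrt_pred_add_one {a : ℕ} (ha : ¬IsSquare a) (b : ℕ) :
    a * b < ((b - 1).sqrt + 1) * ((a - 1).sqrt + 1) * ((a * b - 1).sqrt + 1) := by
  have le_sq (n : ℕ) : n ≤ ((n - 1).sqrt + 1) ^ 2 := by
    have := Nat.lt_succ_sqrt' (n - 1)
    rw [Nat.succ_eq_add_one] at this
    omega
  have lt_sq : a < ((a - 1).sqrt + 1) ^ 2 :=
    (le_sq a).lt_of_ne fun h ↦ ha (h ▸ IsSquare.sq _)
  refine lt_of_pow_lt_pow_left₀ 2 (Nat.zero_le _) ?_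
  calc (a * b) ^ 2 = b * a * (a * b) := by ring
    _ ≤ b * a * ((a * b - 1).sqrt + 1) ^ 2 := by gcongr; exact le_sq _
    _ < ((b - 1).sqrt + 1) ^ 2 * ((a - 1).sqrt + 1) ^ 2 * ((a * b - 1).sqrt + 1) ^ 2 := by
      gcongr ?_ * _
      exact mul_lt_mul_of_le_of_lt_of_nonneg_of_pos (le_sq b) lt_sq (Nat.zero_le _) (by positivity)
    _ = _ := by ring

theorem exists_small_solution_of_congruences {a b : ℕ} (ha : ¬IsSquare a) (hb : b ≠ 0)
    (α : ZMod a) (β : ZMod b) :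
    ∃ u v w : ℤ, (u ≠ 0 ∨ v ≠ 0 ∨ w ≠ 0) ∧ (w : ZMod a) = α * v ∧ (w : ZMod b) = β * u ∧
      u ^ 2 < b ∧ v ^ 2 < a ∧ w ^ 2 < a * b := by
  have ha₀ : a ≠ 0 := by rintro rfl; exact ha IsSquare.zero
  have : NeZero a := ⟨ha₀⟩
  have : NeZero b := ⟨hb⟩
  let f : (Fin 3 → ℤ) →+ ZMod a × ZMod b :=
    AddMonoidHom.mk' (fun x ↦ (x 2 - α * x 1, x 2 - β * x 0)) fun x y ↦ by
      ext <;> push_cast [Pi.add_apply, Prod.fst_add, Prod.snd_add] <;> ring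
  obtain ⟨x, hx, hfx, hbound⟩ := exists_ne_zero_map_eq_zero_of_card_lt_prod f
    ![(b - 1).sqrt + 1, (a - 1).sqrt + 1, (a * b - 1).sqrt + 1]
    (by simpa [Fin.prod_univ_three, ZMod.card] using mul_lt_mul_sqrt_pred_add_one ha b)
  obtain ⟨hfa, hfb⟩ := Prod.ext_iff.mp hfx
  refine ⟨x 0, x 1, x 2, ?_, sub_eq_zero.mp hfa, sub_eq_zero.mp hfb,
    sq_lt_of_abs_lt_sqrt_pred_add_one hb (hbound 0),
    sq_lt_of_abs_lt_sqrt_pred_add_one ha₀ (hbound 1), ?_⟩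
  · by_contra! h
    exact hx (funext fun i ↦ by fin_cases i <;> simp [h])
  · exact_mod_cast sq_lt_of_abs_lt_sqrt_pred_add_one (mul_ne_zero ha₀ hb) (hbound 2)

theorem mul_dvd_sq_add_mul_sq_sub_mul_sq {a b : ℕ} (hab : a.Coprime b) {α : ZMod a} {β : ZMod b}
    (hα : -(b : ZMod a) = α * α) (hβ : (a : ZMod b) = β * β) {u v w : ℤ}
    (ha : (w : ZMod a) = α * v) (hb : (w : ZMod b) = β * u) :
    (a * b : ℤ) ∣ w ^ 2 + b * v ^ 2 - a * u ^ 2 := by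
  refine (Nat.isCoprime_iff_coprime.mpr hab).mul_dvd ?_ ?_ <;>
    rw [← ZMod.intCast_zmod_eq_zero_iff_dvd] <;> push_cast
  · rw [ha, ZMod.natCast_self]
    linear_combination -(v : ZMod a) ^ 2 * hα
  · rw [hb, ZMod.natCast_self]
    linear_combination -(u : ZMod b) ^ 2 * hβ

theorem exists_mul_sq_eq_sq_add_mul_sq {a b : ℕ} (hab : a.Coprime b)
    (ha : IsSquare (-(b : ZMod a))) (hb : IsSquare (a : ZMod b)) :
    ∃ u v w : ℤ, u ≠ 0 ∧ (a : ℤ) * u ^ 2 = w ^ 2 + b * v ^ 2 := by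
  by_cases hsq : IsSquare a
  · obtain ⟨s, rfl⟩ := hsq
    exact ⟨1, 0, s, one_ne_zero, by push_cast; ring⟩
  have hb₀ : b ≠ 0 := by
    rintro rfl
    rw [Nat.coprime_zero_right] at hab
    exact hsq (hab ▸ IsSquare.one)
  obtain ⟨α, hα⟩ := ha
  obtain ⟨β, hβ⟩ := hb
  obtain ⟨u, v, w, hne, hwv, hwu, hu, hv, hw⟩ := exists_small_solution_of_congruences hsq hb₀ α β
  obtain ⟨c, hc⟩ := mul_dvd_sq_add_mul_sq_sub_mul_sq hab hα hβ hwv hwu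
  have hbpos : (0 : ℤ) < b := by positivity
  have hapos : (0 : ℤ) < a := (sq_nonneg v).trans_lt hv
  have habpos : (0 : ℤ) < a * b := mul_pos hapos hbpos
  have hc_lower : -1 < c := by
    refine lt_of_mul_lt_mul_left (a := (a * b : ℤ)) ?_ habpos.le
    nlinarith [sq_nonneg w, sq_nonneg v]
  have hc_upper : c < 2 := by
    refine lt_of_mul_lt_mul_left (a := (a * b : ℤ)) ?_ habpos.le
    nlinarith [sq_nonneg u]
  obtain rfl | rfl : c = 0 ∨ c = 1 := by omega
  · refine ⟨u, v, w, ?_, by linarith⟩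
    rintro rfl
    have hv₀ : v = 0 := by
      by_contra hv₀
      have : 0 < (b : ℤ) * v ^ 2 := by positivity
      linarith [sq_nonneg w]
    have hw₀ : w = 0 := by simpa [hv₀] using hc
    simp [hv₀, hw₀] at hne
  · -- `a (u² + b) = w² + b v²`; multiply by `u² + b`, the form `X² + b Y²` being multiplicative.
    refine ⟨u ^ 2 + b, w + u * v, w * u - b * v, by positivity, ?_⟩
    linear_combination -(u ^ 2 + b : ℤ) * hc

/-! ### The rational three-square theorem -/

/-- `a` is a sum of three squares in `R`. -/
def IsSumThreeSq {R : Type*} [Semiring R] (a : R) : Prop :=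
  ∃ x y z : R, a = x ^ 2 + y ^ 2 + z ^ 2

theorem IsSumThreeSq.sq_mul {R : Type*} [CommSemiring R] {a : R} (ha : IsSumThreeSq a) (c : R) :
    IsSumThreeSq (c ^ 2 * a) := by
  obtain ⟨x, y, z, rfl⟩ := ha
  exact ⟨c * x, c * y, c * z, by ring⟩

theorem isSumThreeSq_of_dvd_add_one {n b : ℕ} (hdvd : n ∣ b + 1) (hn : IsSquare (n : ZMod b))
    (hb : ∃ c d : ℕ, b = c ^ 2 + d ^ 2) : IsSumThreeSq (n : ℚ) := by
  have hcop : n.Coprime b := Nat.Coprime.coprime_dvd_left hdvd (by simp)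
  have hneg : -(b : ZMod n) = 1 := by
    have : (b : ZMod n) + 1 = 0 := by exact_mod_cast (ZMod.natCast_eq_zero_iff _ _).mpr hdvd
    linear_combination -this
  obtain ⟨u, v, w, hu, h⟩ := exists_mul_sq_eq_sq_add_mul_sq hcop (hneg ▸ IsSquare.one) hn
  obtain ⟨c, d, rfl⟩ := hb
  have hu' : (u : ℚ) ≠ 0 := by exact_mod_cast hu
  have h' : (n : ℚ) * u ^ 2 = w ^ 2 + (c ^ 2 + d ^ 2) * v ^ 2 := by exact_mod_cast h
  refine ⟨w / u, c * v / u, d * v / u, ?_⟩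
  field_simp
  linear_combination h'

theorem exists_prime_modEq_four_mul {a n : ℕ} (hn : n ≠ 0) (ha : Odd a) (han : a.Coprime n) :
    ∃ p : ℕ, p.Prime ∧ p ≡ a [MOD 4 * n] := by
  have ha4 : a.Coprime (2 ^ 2) := (Nat.coprime_two_right.mpr ha).pow_right 2
  obtain ⟨p, -, hp, hpa⟩ :=
    Nat.forall_exists_prime_gt_and_modEq 0 (mul_ne_zero four_ne_zero hn) (ha4.mul_right han)
  exact ⟨p, hp, hpa⟩

theorem jacobiSym_mul_eq_one_of_dvd_mul_add_one {k b n : ℕ} (h : n ∣ k * b + 1) :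
    J(-k | n) * J(b | n) = 1 := by
  have hmod : (-k * b : ℤ) ≡ 1 [ZMOD n] := by
    rw [Int.modEq_iff_dvd, neg_mul, sub_neg_eq_add, add_comm]
    exact_mod_cast h
  rw [← jacobiSym.mul_left, jacobiSym.mod_left' hmod, jacobiSym.one_left]

theorem isSquare_natCast_zmod_of_jacobiSym_eq_one {n p : ℕ} (hp : p.Prime) (h : J(n | p) = 1) :
    IsSquare (n : ZMod p) := by
  have : Fact p.Prime := ⟨hp⟩
  exact_mod_cast ZMod.isSquare_of_jacobiSym_eq_one h

theorem isSquare_natCast_zmod_two_mul {n b : ℕ} (hb : Odd b) (h : IsSquare (n : ZMod b)) :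
    IsSquare (n : ZMod (2 * b)) := by
  let e := ZMod.chineseRemainder (Nat.coprime_two_left.mpr hb)
  obtain ⟨x, hx⟩ := h
  have htwo : ∀ y : ZMod 2, y = y * y := by decide
  have he : IsSquare (e n) := ⟨(n, x), by rw [map_natCast]; exact Prod.ext (htwo _) hx⟩
  simpa using he.map e.symm

theorem exists_eq_sq_add_sq_of_prime {p : ℕ} (hp : p.Prime) (h : p % 4 ≠ 3) :
    ∃ c d : ℕ, p = c ^ 2 + d ^ 2 := by
  have : Fact p.Prime := ⟨hp⟩
  obtain ⟨c, d, hcd⟩ := Nat.Prime.sq_add_sq h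
  exact ⟨c, d, hcd.symm⟩

-- `p ≡ 2n - 1` modulo `4n` combines `p ≡ 1` modulo `4` and `p ≡ -1` modulo `n`.
theorem isSumThreeSq_of_mod_four_eq_one {n : ℕ} (h : n % 4 = 1) : IsSumThreeSq (n : ℚ) := by
  have hn : Odd n := Nat.odd_iff.mpr (by omega)
  have hcop : (2 * n - 1).Coprime n := by
    refine Nat.Coprime.coprime_dvd_right (dvd_mul_left n 2) ?_
    exact (Nat.coprime_self_sub_left (by omega)).mpr (Nat.coprime_one_left _)
  obtain ⟨p, hp, hpn⟩ := exists_prime_modEq_four_mul (by omega) (Nat.odd_iff.mpr (by omega)) hcop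
  have hp4 : p % 4 = 1 := by
    have : p % 4 = (2 * n - 1) % 4 := hpn.of_mul_right n
    omega
  have hdvd : n ∣ p + 1 := ((hpn.add_right 1).dvd_iff (dvd_mul_left n 4)).mpr ⟨2, by omega⟩
  have hpJ : J(p | n) = 1 := by
    have := jacobiSym_mul_eq_one_of_dvd_mul_add_one (k := 1) (b := p) (by simpa using hdvd)
    rwa [Nat.cast_one, jacobiSym.at_neg_one hn, ZMod.χ₄_nat_one_mod_four h, one_mul] at this
  have hJ : J(n | p) = 1 := by rw [jacobiSym.quadratic_reciprocity_one_mod_four' hn hp4, hpJ]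
  exact isSumThreeSq_of_dvd_add_one hdvd (isSquare_natCast_zmod_of_jacobiSym_eq_one hp hJ)
    (exists_eq_sq_add_sq_of_prime hp (by omega))

-- For `n = 2k`, `p ≡ n - 1` modulo `4n` makes `p ≡ 1` or `5` modulo `8` according as `k ≡ 1` or `3`
-- modulo `4`, so that `J(2 | p)` compensates `J(-1 | k)`.
theorem isSumThreeSq_of_mod_four_eq_two {n : ℕ} (h : n % 4 = 2) : IsSumThreeSq (n : ℚ) := by
  obtain ⟨k, rfl⟩ : 2 ∣ n := by omega
  have hk : Odd k := Nat.odd_iff.mpr (by omega)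
  have hcop : (2 * k - 1).Coprime (2 * k) :=
    (Nat.coprime_self_sub_left (by omega)).mpr (Nat.coprime_one_left _)
  obtain ⟨p, hp, hpk⟩ := exists_prime_modEq_four_mul (by omega) (Nat.odd_iff.mpr (by omega)) hcop
  have hp8 : p % 8 = (2 * k - 1) % 8 := hpk.of_dvd ⟨k, by ring⟩
  have hdvd : 2 * k ∣ p + 1 :=
    ((hpk.add_right 1).dvd_iff (dvd_mul_left _ 4)).mpr ⟨1, by omega⟩
  have hpJ : ZMod.χ₄ k * J(p | k) = 1 := by
    rw [← jacobiSym.at_neg_one hk]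
    simpa using jacobiSym_mul_eq_one_of_dvd_mul_add_one (k := 1) (b := p)
      (by simpa using (dvd_mul_left k 2).trans hdvd)
  have hχ : ZMod.χ₈ p = ZMod.χ₄ k := by
    rw [ZMod.χ₈_nat_eq_if_mod_eight, ZMod.χ₄_nat_eq_if_mod_four]
    split_ifs <;> omega
  have hJ : J((2 * k : ℕ) | p) = 1 := by
    rw [Nat.cast_mul, jacobiSym.mul_left, Nat.cast_two,
      jacobiSym.at_two (Nat.odd_iff.mpr (by omega)),
      jacobiSym.quadratic_reciprocity_one_mod_four' hk (by omega), hχ, hpJ]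
  exact isSumThreeSq_of_dvd_add_one hdvd (isSquare_natCast_zmod_of_jacobiSym_eq_one hp hJ)
    (exists_eq_sq_add_sq_of_prime hp (by omega))

-- Here `J(-1 | n) = -1` rules out `b = p`, but `J(-2 | n) = 1` allows `b = 2p`.
theorem isSumThreeSq_of_mod_eight_eq_three {n : ℕ} (h : n % 8 = 3) : IsSumThreeSq (n : ℚ) := by
  have hn : Odd n := Nat.odd_iff.mpr (by omega)
  have hcop : ((n - 1) / 2).Coprime n := by
    refine Nat.Coprime.coprime_dvd_left (k := n - 1) ⟨2, by omega⟩ ?_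
    exact (Nat.coprime_self_sub_left (by omega)).mpr (Nat.coprime_one_left _)
  obtain ⟨p, hp, hpn⟩ := exists_prime_modEq_four_mul (by omega) (Nat.odd_iff.mpr (by omega)) hcop
  have hp4 : p % 4 = 1 := by
    have : p % 4 = (n - 1) / 2 % 4 := hpn.of_mul_right n
    omega
  have hdvd : n ∣ 2 * p + 1 :=
    (((hpn.mul_left 2).add_right 1).dvd_iff (dvd_mul_left n 4)).mpr ⟨1, by omega⟩
  have hpJ : J(p | n) = 1 := by
    have hχ : ZMod.χ₈' n = 1 := by
      rw [ZMod.χ₈'_nat_eq_if_mod_eight]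
      split_ifs <;> omega
    have := jacobiSym_mul_eq_one_of_dvd_mul_add_one hdvd
    rwa [Nat.cast_two, jacobiSym.at_neg_two hn, hχ, one_mul] at this
  have hJ : J(n | p) = 1 := by rw [jacobiSym.quadratic_reciprocity_one_mod_four' hn hp4, hpJ]
  have hsq : IsSquare (n : ZMod (2 * p)) :=
    isSquare_natCast_zmod_two_mul (Nat.odd_iff.mpr (by omega))
      (isSquare_natCast_zmod_of_jacobiSym_eq_one hp hJ)
  obtain ⟨c, d, hcd⟩ := exists_eq_sq_add_sq_of_prime hp (by omega)
  exact isSumThreeSq_of_dvd_add_one hdvd hsq (Nat.sq_add_sq_mul (x := 1) (y := 1) rfl hcd)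

theorem isSumThreeSq_natCast {n : ℕ} (h4 : n % 4 ≠ 0) (h8 : n % 8 ≠ 7) :
    IsSumThreeSq (n : ℚ) := by
  obtain h | h | h : n % 4 = 1 ∨ n % 4 = 2 ∨ n % 8 = 3 := by omega
  · exact isSumThreeSq_of_mod_four_eq_one h
  · exact isSumThreeSq_of_mod_four_eq_two h
  · exact isSumThreeSq_of_mod_eight_eq_three h

/-! ### The quaternary form `x² + q (y² + z² + w²)` -/

theorem mul_mod_four_ne_zero_of_odd {a b : ℕ} (ha : Odd a) (hb : b % 4 ≠ 0) :
    a * b % 4 ≠ 0 := fun h ↦ by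
  have hcop : Nat.Coprime (2 ^ 2) a := (Nat.coprime_two_left.mpr ha).pow_left 2
  exact hb (Nat.mod_eq_zero_of_dvd (hcop.dvd_of_dvd_mul_left (Nat.dvd_of_mod_eq_zero h)))

theorem exists_sq_le_and_mul_sub_sq_mod_ne {k n : ℕ} (hk : k % 4 ≠ 0) (hn : n % 4 ≠ 0) :
    ∃ j : ℕ, j ^ 2 ≤ 9 * n ∧ k * (9 * n - j ^ 2) % 4 ≠ 0 ∧ k * (9 * n - j ^ 2) % 8 ≠ 7 := by
  by_cases heven : Even k ∧ Even n
  · obtain ⟨⟨i, rfl⟩, ⟨l, rfl⟩⟩ := heven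
    have hmul : (i + i) * (9 * (l + l) - 1 ^ 2) = 36 * (i * l) - 2 * i := by
      rw [Nat.mul_sub]
      ring_nf
    refine ⟨1, by omega, ?_⟩
    have : i ≤ i * l := Nat.le_mul_of_pos_right i (by omega)
    omega
  by_cases h7 : k * n % 8 = 7
  · have hk_odd : Odd k := ((Nat.odd_mul (n := n)).mp (Nat.odd_iff.mpr (by omega))).1
    have hmul : k * (9 * n - 2 ^ 2) = 9 * (k * n) - 4 * k := by
      rw [Nat.mul_sub]
      ring_nf
    -- As `k` is odd, subtracting `4k` turns the residue `7` into `3` modulo `8`.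
    refine ⟨2, by omega, ?_⟩
    have : k ≤ k * n := Nat.le_mul_of_pos_right k (by omega)
    have := Nat.odd_iff.mp hk_odd
    omega
  · have hmul : k * (9 * n - 0 ^ 2) = 9 * (k * n) := by
      rw [zero_pow two_ne_zero, Nat.sub_zero]
      ring
    have h4 : k * n % 4 ≠ 0 := by
      rcases not_and_or.mp heven with hk_not_even | hn_not_even
      · exact mul_mod_four_ne_zero_of_odd (Nat.not_even_iff_odd.mp hk_not_even) hn
      · exact mul_comm k n ▸
          mul_mod_four_ne_zero_of_odd (Nat.not_even_iff_odd.mp hn_not_even) hk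
    exact ⟨0, by omega, by omega, by omega⟩

theorem exists_isSumThreeSq_mul_sub_sq_natCast {k n : ℕ} (hk : k % 4 ≠ 0) (hn : n % 4 ≠ 0) :
    ∃ x : ℚ, IsSumThreeSq (k * (n - x ^ 2)) := by
  obtain ⟨j, hj, h4, h8⟩ := exists_sq_le_and_mul_sub_sq_mod_ne hk hn
  have hscale : (k * (n - (j / 3) ^ 2) : ℚ) = (1 / 3) ^ 2 * (k * (9 * n - j ^ 2) : ℕ) := by
    push_cast [hj]
    ring
  exact ⟨j / 3, hscale ▸ (isSumThreeSq_natCast h4 h8).sq_mul (1 / 3)⟩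

theorem exists_eq_natCast_mul_sq {q : ℚ} (hq : 0 ≤ q) :
    ∃ (k : ℕ) (a : ℚ), k % 4 ≠ 0 ∧ q = k * a ^ 2 := by
  lift q to ℚ≥0 using hq
  obtain ⟨k, a, hka, hk⟩ := Nat.sq_mul_squarefree (q.num * q.den)
  refine ⟨k, a / q.den, fun h ↦ ?_, ?_⟩
  · have := hk 2 (Nat.dvd_of_mod_eq_zero h)
    simp at this
  · have hka' : (a : ℚ) ^ 2 * k = q.num * q.den := by exact_mod_cast hka
    have hden : (q.den : ℚ) ≠ 0 := by exact_mod_cast q.den_ne_zero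
    have hq : (q : ℚ) * q.den = q.num := by exact_mod_cast q.mul_den_eq_num
    field_simp
    linear_combination (q.den : ℚ) * hq - hka'

theorem exists_isSumThreeSq_mul_sub_sq {q t : ℚ} (hq : 0 ≤ q) (ht : 0 ≤ t) :
    ∃ x : ℚ, IsSumThreeSq (q * (t - x ^ 2)) := by
  obtain ⟨k, a, hk, rfl⟩ := exists_eq_natCast_mul_sq hq
  obtain ⟨n, b, hn, rfl⟩ := exists_eq_natCast_mul_sq ht
  obtain ⟨x, hx⟩ := exists_isSumThreeSq_mul_sub_sq_natCast hk hn
  have hscale : k * a ^ 2 * (n * b ^ 2 - (b * x) ^ 2) = (a * b) ^ 2 * (k * (n - x ^ 2)) := by ring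
  exact ⟨b * x, hscale ▸ hx.sq_mul (a * b)⟩

theorem stmt_8_general (r m : ℚ) (hr : 0 ≤ r) (hm : 0 < m) :
    ∃ x y z w : ℚ,
      r * (4 * m - 1) / (8 * m) + 2 * r * m * x ^ 2 + y ^ 2 + z ^ 2 + w ^ 2 = r := by
  obtain ⟨x, y, z, w, h⟩ := exists_isSumThreeSq_mul_sub_sq (q := 2 * r * m) (t := 4 * m + 1)
    (by positivity) (by positivity)
  refine ⟨x / (4 * m), y / (4 * m), z / (4 * m), w / (4 * m), ?_⟩
  field_simp
  linear_combination -8 * h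

/-- For all positive integers `r, m`, the equation
`r(4m-1)/(8m) + 2rm x² + y² + z² + w² = r` has a rational solution. -/
theorem stmt_8 (r m : ℕ) (hr : 0 < r) (hm : 0 < m) :
    ∃ x y z w : ℚ,
      (r : ℚ) * (4 * m - 1) / (8 * m) + 2 * r * m * x ^ 2 + y ^ 2 + z ^ 2 + w ^ 2 = r :=
  stmt_8_general r m (by positivity) (by positivity)
end

section
/- Let s be a square-free positive integer and m a positive integer. Then there exist integers t₁ and x₁ such that s·((4m+1)t₁² - x₁²) is positive and is a sum of three integer squares. -/
/-!
Every positive integer `n` with `n % 4 ≠ 0` and `n % 8 ≠ 7` is a sum of three squares. If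
`d * n - 1` divides some `e ^ 2 + d`, then `n` is a value of a positive definite integral ternary
form of determinant one. Hermite reduction bounds the leading coefficient of such a form by
`(64 / 27) ^ (1 / 3) < 2`, so it may be taken to be `1`; completing the square then leaves a
positive definite binary form of determinant one, whose values are sums of two squares. Suitable
`d` and `e` come from Dirichlet's theorem, with `d * n - 1` a prime or twice a prime, and quadratic
reciprocity.

To make `s * (D * t ^ 2 - x ^ 2)` congruent to `1` or `2` modulo `4`, first remove the powers of
`4` from `s` and `D`; then one of `(t, x) = (1, 0), (1, 1), (2, 1)` works.
-/

open scoped NumberTheorySymbols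
open ZMod (χ₄ χ₈)

theorem exists_eq_sq_add_sq_of_mul {a n : ℕ} (ha₀ : a ≠ 0) (ha : ∃ x y : ℕ, a = x ^ 2 + y ^ 2)
    (han : ∃ x y : ℕ, a * n = x ^ 2 + y ^ 2) : ∃ x y : ℕ, n = x ^ 2 + y ^ 2 := by
  rcases eq_or_ne n 0 with rfl | hn₀
  · exact ⟨0, 0, rfl⟩
  rw [Nat.eq_sq_add_sq_iff] at ha han ⊢
  intro q hq hq4
  have := Fact.mk (Nat.prime_of_mem_primeFactors hq)
  have hadd : Even (padicValNat q a + padicValNat q n) := by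
    rw [← padicValNat.mul ha₀ hn₀]
    exact han q (Nat.primeFactors_mono (dvd_mul_left n a) (mul_ne_zero ha₀ hn₀) hq) hq4
  have hval : Even (padicValNat q a) := by
    by_cases hqa : q ∣ a
    · exact ha q (Nat.mem_primeFactors.2 ⟨Fact.out, hqa, ha₀⟩) hq4
    · simp [padicValNat.eq_zero_of_not_dvd hqa]
  exact (Nat.even_add.1 hadd).1 hval

theorem exists_binaryForm_eq_sq_add_sq {a b r : ℤ} (ha : 0 < a) (hdet : a * b - r ^ 2 = 1)
    (x y : ℤ) : ∃ u v : ℤ, a * x ^ 2 + 2 * r * x * y + b * y ^ 2 = u ^ 2 + v ^ 2 := by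
  obtain ⟨n, hn⟩ : ∃ n, n = a * x ^ 2 + 2 * r * x * y + b * y ^ 2 := ⟨_, rfl⟩
  have hcomplete : a * n = (a * x + r * y) ^ 2 + y ^ 2 := by
    linear_combination y ^ 2 * hdet + a * hn
  have hn₀ : 0 ≤ n := nonneg_of_mul_nonneg_right (hcomplete ▸ by positivity) ha
  rw [← hn]
  lift a to ℕ using ha.le
  lift n to ℕ using hn₀
  have hsquare : IsSquare (-1 : ZMod a) := ⟨r, by
    have hdet' := congrArg (Int.cast : ℤ → ZMod a) hdet
    push_cast [CharP.cast_eq_zero, zero_mul, zero_sub] at hdet'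
    linear_combination hdet'⟩
  obtain ⟨u, v, huv⟩ := exists_eq_sq_add_sq_of_mul (by lia)
    (Nat.eq_sq_add_sq_of_isSquare_mod_neg_one hsquare)
    ⟨(a * x + r * y).natAbs, y.natAbs, by zify; simpa only [sq_abs] using hcomplete⟩
  exact ⟨u, v, mod_cast huv⟩

theorem exists_sq_two_mul_add_mul_le (r : ℤ) {a : ℤ} (ha : 0 < a) :
    ∃ k : ℤ, (2 * (r + k * a)) ^ 2 ≤ a ^ 2 := by
  have hmod := Int.mul_ediv_add_emod (2 * r + a) (2 * a)
  have hnonneg := Int.emod_nonneg (2 * r + a) (show 2 * a ≠ 0 by lia)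
  have hlt := Int.emod_lt_of_pos (2 * r + a) (show 0 < 2 * a by lia)
  exact ⟨-((2 * r + a) / (2 * a)), sq_le_sq' (by linarith) (by linarith)⟩

/-- The integral ternary quadratic form
`a * x ^ 2 + b * y ^ 2 + c * z ^ 2 + 2 * u * y * z + 2 * v * x * z + 2 * w * x * y`, that is, the
symmetric integer matrix with diagonal `a, b, c` and off-diagonal entries `u, v, w`, each opposite
to the corresponding diagonal entry. -/
structure TernaryForm where
  a : ℤ
  b : ℤ
  c : ℤ
  u : ℤ
  v : ℤ
  w : ℤ

namespace TernaryForm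

/-- The value of a ternary form at an integer vector. -/
def eval (f : TernaryForm) (x y z : ℤ) : ℤ :=
  f.a * x ^ 2 + f.b * y ^ 2 + f.c * z ^ 2 + 2 * f.u * y * z + 2 * f.v * x * z + 2 * f.w * x * y

/-- The set of integers represented by a ternary form, zero vector included. -/
def values (f : TernaryForm) : Set ℤ := {n | ∃ x y z, f.eval x y z = n}

/-- The second leading principal minor of the symmetric matrix of a ternary form. -/
def minor (f : TernaryForm) : ℤ := f.a * f.b - f.w ^ 2

/-- The determinant of the symmetric matrix of a ternary form. -/
def det (f : TernaryForm) : ℤ :=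
  f.a * f.b * f.c + 2 * f.u * f.v * f.w - f.a * f.u ^ 2 - f.b * f.v ^ 2 - f.c * f.w ^ 2

/-- Positive definiteness of a ternary form, encoded by Sylvester's criterion. -/
structure IsPosDef (f : TernaryForm) : Prop where
  a_pos : 0 < f.a
  minor_pos : 0 < f.minor
  det_pos : 0 < f.det

/-- The equivalent form `f (y + k * x, x, z)`, used to reduce the coefficient `a`. -/
def shearSwapXY (f : TernaryForm) (k : ℤ) : TernaryForm where
  a := f.a * k ^ 2 + 2 * f.w * k + f.b
  b := f.a
  c := f.c
  u := f.v
  v := f.u + k * f.v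
  w := f.w + k * f.a

/-- The equivalent form `f (x, z + k * y, y)`, used to reduce the minor while keeping `a`. -/
def shearSwapYZ (f : TernaryForm) (k : ℤ) : TernaryForm where
  a := f.a
  b := f.b * k ^ 2 + 2 * f.u * k + f.c
  c := f.b
  u := f.u + k * f.b
  v := f.w
  w := f.v + k * f.w

variable (f : TernaryForm) (k : ℤ)

theorem values_shearSwapXY : (f.shearSwapXY k).values = f.values := by
  ext n
  constructor
  · rintro ⟨x, y, z, rfl⟩
    exact ⟨y + k * x, x, z, by simp only [eval, shearSwapXY]; ring⟩
  · rintro ⟨x, y, z, rfl⟩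
    exact ⟨y, x - k * y, z, by simp only [eval, shearSwapXY]; ring⟩

theorem values_shearSwapYZ : (f.shearSwapYZ k).values = f.values := by
  ext n
  constructor
  · rintro ⟨x, y, z, rfl⟩
    exact ⟨x, z + k * y, y, by simp only [eval, shearSwapYZ]; ring⟩
  · rintro ⟨x, y, z, rfl⟩
    exact ⟨x, z, y - k * z, by simp only [eval, shearSwapYZ]; ring⟩

theorem minor_shearSwapXY : (f.shearSwapXY k).minor = f.minor := by
  simp only [minor, shearSwapXY]; ring

theorem det_shearSwapXY : (f.shearSwapXY k).det = f.det := by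
  simp only [det, shearSwapXY]; ring

theorem det_shearSwapYZ : (f.shearSwapYZ k).det = f.det := by
  simp only [det, shearSwapYZ]; ring

theorem a_mul_a_shearSwapXY : f.a * (f.shearSwapXY k).a = (f.w + k * f.a) ^ 2 + f.minor := by
  simp only [minor, shearSwapXY]; ring

theorem minor_mul_minor_shearSwapYZ :
    f.minor * (f.shearSwapYZ k).minor =
      (f.a * f.u - f.v * f.w + k * f.minor) ^ 2 + f.a * f.det := by
  simp only [minor, det, shearSwapYZ]; ring

variable {f}

namespace IsPosDef

theorem shearSwapXY (hf : f.IsPosDef) : (f.shearSwapXY k).IsPosDef where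
  a_pos := by
    refine pos_of_mul_pos_right ?_ hf.a_pos.le
    linarith [f.a_mul_a_shearSwapXY k, hf.minor_pos, sq_nonneg (f.w + k * f.a)]
  minor_pos := by rw [minor_shearSwapXY]; exact hf.minor_pos
  det_pos := by rw [det_shearSwapXY]; exact hf.det_pos

theorem shearSwapYZ (hf : f.IsPosDef) : (f.shearSwapYZ k).IsPosDef where
  a_pos := hf.a_pos
  minor_pos := by
    refine pos_of_mul_pos_right ?_ hf.minor_pos.le
    linarith [f.minor_mul_minor_shearSwapYZ k, mul_pos hf.a_pos hf.det_pos,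
      sq_nonneg (f.a * f.u - f.v * f.w + k * f.minor)]
  det_pos := by rw [det_shearSwapYZ]; exact hf.det_pos

theorem exists_a_shearSwapXY_lt (hf : f.IsPosDef) (h : 4 * f.minor < 3 * f.a ^ 2) :
    ∃ k, (f.shearSwapXY k).a < f.a := by
  obtain ⟨k, hk⟩ := exists_sq_two_mul_add_mul_le f.w hf.a_pos
  refine ⟨k, lt_of_mul_lt_mul_left ?_ hf.a_pos.le⟩
  linarith [f.a_mul_a_shearSwapXY k]

theorem exists_minor_shearSwapYZ_lt (hf : f.IsPosDef) (h : 4 * f.a * f.det < 3 * f.minor ^ 2) :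
    ∃ k, (f.shearSwapYZ k).minor < f.minor := by
  obtain ⟨k, hk⟩ := exists_sq_two_mul_add_mul_le (f.a * f.u - f.v * f.w) hf.minor_pos
  refine ⟨k, lt_of_mul_lt_mul_left ?_ hf.minor_pos.le⟩
  linarith [f.minor_mul_minor_shearSwapYZ k]

theorem a_pow_three_le (hf : f.IsPosDef) (ha : 3 * f.a ^ 2 ≤ 4 * f.minor)
    (hminor : 3 * f.minor ^ 2 ≤ 4 * f.a * f.det) : 27 * f.a ^ 3 ≤ 64 * f.det := by
  have hsq : (3 * f.a ^ 2) ^ 2 ≤ (4 * f.minor) ^ 2 := pow_le_pow_left₀ (by positivity) ha 2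
  exact le_of_mul_le_mul_left (by linarith) hf.a_pos

theorem exists_a_pow_three_le {f : TernaryForm} (hf : f.IsPosDef) :
    ∃ g : TernaryForm, g.IsPosDef ∧ g.values = f.values ∧ g.det = f.det ∧
      27 * g.a ^ 3 ≤ 64 * g.det := by
  rcases lt_or_ge (4 * f.minor) (3 * f.a ^ 2) with ha | ha
  · obtain ⟨k, hk⟩ := hf.exists_a_shearSwapXY_lt ha
    simpa only [values_shearSwapXY, det_shearSwapXY] using (hf.shearSwapXY k).exists_a_pow_three_le
  rcases lt_or_ge (4 * f.a * f.det) (3 * f.minor ^ 2) with hminor | hminor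
  · obtain ⟨k, hk⟩ := hf.exists_minor_shearSwapYZ_lt hminor
    simpa only [values_shearSwapYZ, det_shearSwapYZ] using (hf.shearSwapYZ k).exists_a_pow_three_le
  exact ⟨f, hf, rfl, rfl, hf.a_pow_three_le ha hminor⟩
termination_by (f.a.toNat, f.minor.toNat)
decreasing_by
  · exact Prod.Lex.left _ _ ((Int.toNat_lt_toNat hf.a_pos).2 hk)
  · exact Prod.Lex.right _ ((Int.toNat_lt_toNat hf.minor_pos).2 hk)

theorem exists_eq_sum_three_sq_of_a_eq_one (hf : f.IsPosDef) (hdet : f.det = 1) (ha : f.a = 1)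
    {n : ℤ} (hn : n ∈ f.values) : ∃ x y z : ℤ, n = x ^ 2 + y ^ 2 + z ^ 2 := by
  obtain ⟨x, y, z, rfl⟩ := hn
  have hbinary : f.minor * (f.c - f.v ^ 2) - (f.u - f.v * f.w) ^ 2 = 1 := by
    simp only [det, minor, ha] at hdet ⊢
    linear_combination hdet
  obtain ⟨y', z', h⟩ := exists_binaryForm_eq_sq_add_sq hf.minor_pos hbinary y z
  refine ⟨x + f.w * y + f.v * z, y', z', ?_⟩
  simp only [eval, minor, ha] at h ⊢
  linear_combination h

theorem exists_eq_sum_three_sq (hf : f.IsPosDef) (hdet : f.det = 1) {n : ℤ} (hn : n ∈ f.values) :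
    ∃ x y z : ℤ, n = x ^ 2 + y ^ 2 + z ^ 2 := by
  obtain ⟨g, hg, hvalues, hgdet, hbound⟩ := hf.exists_a_pow_three_le
  rw [← hvalues] at hn
  rw [hdet] at hgdet
  have ha : g.a < 2 := lt_of_pow_lt_pow_left₀ 3 (by simp) (by lia)
  have := hg.a_pos
  exact hg.exists_eq_sum_three_sq_of_a_eq_one hgdet (by lia) hn

end IsPosDef

end TernaryForm

theorem exists_eq_sum_three_sq_of_dvd {n d e : ℤ} (hd : 0 < d) (hdn : 0 < d * n - 1)
    (h : d * n - 1 ∣ e ^ 2 + d) : ∃ x y z : ℤ, n = x ^ 2 + y ^ 2 + z ^ 2 := by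
  obtain ⟨a, ha⟩ := h
  let f : TernaryForm := ⟨a, d * n - 1, n, 0, 1, e⟩
  have ha_pos : 0 < a := pos_of_mul_pos_right (ha ▸ by positivity) hdn.le
  have hminor : f.minor = d := by
    simp only [TernaryForm.minor, f]
    linear_combination -ha
  have hdet : f.det = 1 := by
    simp only [TernaryForm.det, f]
    linear_combination -n * ha
  have hf : f.IsPosDef := ⟨ha_pos, hminor ▸ hd, by simp [hdet]⟩
  exact hf.exists_eq_sum_three_sq hdet ⟨0, 0, 1, by simp [TernaryForm.eval, f]⟩

theorem jacobiSym_eq_χ₄_of_dvd_add_one {a : ℤ} {d : ℕ} (hd : Odd d) (h : (d : ℤ) ∣ a + 1) :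
    J(a | d) = χ₄ d := by
  rw [← jacobiSym.at_neg_one hd]
  exact jacobiSym.mod_left' (Int.modEq_iff_dvd.2 (by simpa using h)).symm

theorem jacobiSym_eq_one_of_dvd_two_mul_add_one {a : ℤ} {d : ℕ} (hd : d % 8 = 1 ∨ d % 8 = 3)
    (h : (d : ℤ) ∣ 2 * a + 1) : J(a | d) = 1 := by
  have hodd : Odd d := Nat.odd_iff.2 (by lia)
  have hprod := jacobiSym_eq_χ₄_of_dvd_add_one hodd h
  rw [jacobiSym.mul_left, jacobiSym.at_two hodd, ZMod.χ₈_nat_mod_eight,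
    ZMod.χ₄_nat_mod_four] at hprod
  rcases hd with hd | hd
  · rw [hd, show d % 4 = 1 by lia] at hprod
    simpa using hprod
  · rw [hd, show d % 4 = 3 by lia] at hprod
    simpa using hprod

theorem jacobiSym_neg_eq_jacobiSym {d p : ℕ} (hd : Odd d) (hp : Odd p)
    (h : d % 4 = 3 ∨ p % 4 = 1) : J(-d | p) = J(p | d) := by
  rw [jacobiSym.neg _ hp]
  rcases Nat.odd_mod_four_iff.1 (Nat.odd_iff.1 hp) with hp4 | hp4
  · rw [ZMod.χ₄_nat_one_mod_four hp4, one_mul,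
      jacobiSym.quadratic_reciprocity_one_mod_four' hd hp4]
  · rw [ZMod.χ₄_nat_three_mod_four hp4,
      jacobiSym.quadratic_reciprocity_three_mod_four (by lia) hp4, neg_one_mul, neg_neg]

theorem exists_dvd_sq_add_of_jacobiSym_neg_eq_one {p : ℕ} (hp : p.Prime) {d : ℤ}
    (h : J(-d | p) = 1) : ∃ e : ℤ, (p : ℤ) ∣ e ^ 2 + d := by
  have := Fact.mk hp
  obtain ⟨y, hy⟩ := ZMod.isSquare_of_jacobiSym_eq_one h
  obtain ⟨e, rfl⟩ := ZMod.intCast_surjective y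
  refine ⟨e, (ZMod.intCast_zmod_eq_zero_iff_dvd _ _).1 ?_⟩
  push_cast at hy ⊢
  linear_combination -hy

theorem exists_two_mul_dvd_sq_add {p d : ℤ} (hp : Odd p) (h : ∃ e, p ∣ e ^ 2 + d) :
    ∃ e, 2 * p ∣ e ^ 2 + d := by
  obtain ⟨e, he⟩ := h
  have hcop : IsCoprime 2 p := Int.isCoprime_two_left.2 hp
  have hshift : (e + p) ^ 2 + d = e ^ 2 + d + p * (2 * e + p) := by ring
  rcases Int.even_or_odd (e ^ 2 + d) with heven | hodd
  · exact ⟨e, hcop.mul_dvd heven.two_dvd he⟩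
  · refine ⟨e + p, hshift ▸ hcop.mul_dvd (Even.two_dvd ?_) (he.add (dvd_mul_right p _))⟩
    exact hodd.add_odd (hp.mul ((even_two_mul e).add_odd hp))

theorem exists_prime_eq_mul_add {m c : ℕ} (hm : m ≠ 0) (hc : c.Coprime m) :
    ∃ p v : ℕ, p.Prime ∧ p = m * v + c := by
  obtain ⟨p, hpc, hp, hmod⟩ := Nat.forall_exists_prime_gt_and_modEq c hm hc
  obtain ⟨v, hv⟩ := (Nat.modEq_iff_dvd' hpc.le).1 hmod.symm
  exact ⟨p, v, hp, by lia⟩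

theorem coprime_four_mul {c n : ℕ} (hc : Odd c) (h : c.Coprime n) : c.Coprime (4 * n) :=
  ((Nat.coprime_two_right.2 hc).pow_right 2).mul_right h

theorem exists_eq_sum_three_sq_of_mod_four_eq_two {n : ℕ} (hn : n % 4 = 2) :
    ∃ x y z : ℤ, (n : ℤ) = x ^ 2 + y ^ 2 + z ^ 2 := by
  obtain ⟨c, rfl⟩ : ∃ c, n = c + 1 := ⟨n - 1, by lia⟩
  have hcop : c.Coprime (4 * (c + 1)) :=
    coprime_four_mul (Nat.odd_iff.2 (by lia)) (by simp)
  obtain ⟨p, v, hp, hpv⟩ := exists_prime_eq_mul_add (by lia) hcop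
  obtain ⟨d, hd⟩ : ∃ d, d = 4 * v + 1 := ⟨_, rfl⟩
  have hdn : (d : ℤ) * (c + 1 : ℕ) - 1 = p := by
    rw [hd, hpv]
    push_cast
    ring
  have hp4 : p % 4 = 1 := by rw [hpv, mul_assoc]; lia
  have hd_odd : Odd d := Nat.odd_iff.2 (by lia)
  have hjac : J(-d | p) = 1 := by
    rw [jacobiSym_neg_eq_jacobiSym hd_odd (Nat.odd_iff.2 (by lia)) (.inr hp4),
      jacobiSym_eq_χ₄_of_dvd_add_one hd_odd ⟨(c + 1 : ℕ), by linear_combination -hdn⟩,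
      ZMod.χ₄_nat_one_mod_four (by lia)]
  obtain ⟨e, he⟩ := exists_dvd_sq_add_of_jacobiSym_neg_eq_one hp hjac
  exact exists_eq_sum_three_sq_of_dvd (by lia) (by lia) (hdn ▸ he)

theorem exists_eq_sum_three_sq_of_two_mul_add_one_eq {n k c : ℕ} (hc : 2 * c + 1 = k * n)
    (hkc : k % 8 = 1 ∧ c % 4 = 1 ∨ k % 8 = 3 ∧ c % 2 = 1) :
    ∃ x y z : ℤ, (n : ℤ) = x ^ 2 + y ^ 2 + z ^ 2 := by
  have hcop : c.Coprime (4 * n) :=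
    coprime_four_mul (Nat.odd_iff.2 (by lia)) <|
      Nat.isCoprime_iff_coprime.1 ⟨-2, k, by zify at hc; linear_combination -hc⟩
  obtain ⟨p, v, hp, hpv⟩ := exists_prime_eq_mul_add (by lia) hcop
  obtain ⟨d, hd⟩ : ∃ d, d = 8 * v + k := ⟨_, rfl⟩
  have hdn : (d : ℤ) * n - 1 = 2 * p := by
    zify at hc
    rw [hd, hpv]
    push_cast
    linear_combination -hc
  have hp4 : p % 4 = c % 4 := by rw [hpv, mul_assoc]; lia
  have hp_odd : Odd p := Nat.odd_iff.2 (by lia)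
  have hjac : J(-d | p) = 1 := by
    rw [jacobiSym_neg_eq_jacobiSym (Nat.odd_iff.2 (by lia)) hp_odd (by lia)]
    exact jacobiSym_eq_one_of_dvd_two_mul_add_one (by lia) ⟨n, by linear_combination -hdn⟩
  obtain ⟨e, he⟩ := exists_two_mul_dvd_sq_add ((Int.odd_coe_nat p).2 hp_odd)
    (exists_dvd_sq_add_of_jacobiSym_neg_eq_one hp hjac)
  have hp_pos := hp.pos
  exact exists_eq_sum_three_sq_of_dvd (by lia) (by lia) (hdn ▸ he)

theorem exists_eq_sum_three_sq_of_mod_four_of_mod_eight {n : ℕ} (h4 : n % 4 ≠ 0) (h8 : n % 8 ≠ 7) :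
    ∃ x y z : ℤ, (n : ℤ) = x ^ 2 + y ^ 2 + z ^ 2 := by
  obtain h | h | h : n % 4 = 2 ∨ n % 8 = 3 ∨ n % 4 = 1 := by lia
  · exact exists_eq_sum_three_sq_of_mod_four_eq_two h
  · exact exists_eq_sum_three_sq_of_two_mul_add_one_eq (k := 1) (c := n / 2) (by lia) (by lia)
  · exact exists_eq_sum_three_sq_of_two_mul_add_one_eq (k := 3) (c := 3 * n / 2) (by lia) (by lia)

theorem exists_mul_sub_sq_emod_four {s D : ℤ} (hD : 0 < D) (hs4 : s % 4 ≠ 0) (hD4 : D % 4 ≠ 0) :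
    ∃ t x : ℤ, 0 < D * t ^ 2 - x ^ 2 ∧
      (s * (D * t ^ 2 - x ^ 2) % 4 = 1 ∨ s * (D * t ^ 2 - x ^ 2) % 4 = 2) := by
  obtain ⟨hs, hD'⟩ | ⟨hs, hD'⟩ | ⟨hs, hD'⟩ | h :
      s % 4 = 3 ∧ D % 4 = 1 ∨ s % 4 = 2 ∧ D % 4 = 2 ∨ s % 4 = 1 ∧ D % 4 = 3 ∨
        s * D % 4 = 1 ∨ s * D % 4 = 2 := by
    rw [Int.mul_emod]
    obtain hs | hs | hs : s % 4 = 1 ∨ s % 4 = 2 ∨ s % 4 = 3 := by lia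
    all_goals
      obtain hD' | hD' | hD' : D % 4 = 1 ∨ D % 4 = 2 ∨ D % 4 = 3 := by lia
      all_goals simp [hs, hD']
  · exact ⟨2, 1, by lia, by simp [Int.mul_emod, Int.sub_emod, hs]⟩
  · exact ⟨1, 1, by lia, by simp [Int.mul_emod, Int.sub_emod, hs, hD']⟩
  · exact ⟨1, 1, by lia, by simp [Int.mul_emod, Int.sub_emod, hs, hD']⟩
  · exact ⟨1, 0, by simpa using hD, by simpa using h⟩

theorem exists_pos_eq_sum_three_sq_of_not_four_dvd {s D : ℕ} (hs : ¬4 ∣ s) (hD : ¬4 ∣ D) :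
    ∃ t x : ℤ, 0 < (s : ℤ) * (D * t ^ 2 - x ^ 2) ∧
      ∃ a b c : ℤ, (s : ℤ) * (D * t ^ 2 - x ^ 2) = a ^ 2 + b ^ 2 + c ^ 2 := by
  obtain ⟨t, x, hpos, hmod⟩ := exists_mul_sub_sq_emod_four (s := s) (D := D) (by lia) (by lia)
    (by lia)
  have hpos' : 0 < (s : ℤ) * (D * t ^ 2 - x ^ 2) := mul_pos (by lia) hpos
  refine ⟨t, x, hpos', ?_⟩
  lift (s : ℤ) * (D * t ^ 2 - x ^ 2) to ℕ using hpos'.le with n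
  exact exists_eq_sum_three_sq_of_mod_four_of_mod_eight (by lia) (by lia)

theorem stmt_10_general (s D : ℕ) (hs : 0 < s) (hD : 0 < D) :
    ∃ t x : ℤ, 0 < (s : ℤ) * (D * t ^ 2 - x ^ 2) ∧
      ∃ a b c : ℤ, (s : ℤ) * (D * t ^ 2 - x ^ 2) = a ^ 2 + b ^ 2 + c ^ 2 := by
  obtain ⟨i, s', hs', rfl⟩ := Nat.exists_eq_pow_mul_and_not_dvd hs.ne' 4 (by simp)
  obtain ⟨j, D', hD', rfl⟩ := Nat.exists_eq_pow_mul_and_not_dvd hD.ne' 4 (by simp)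
  obtain ⟨t, x, hpos, a, b, c, habc⟩ := exists_pos_eq_sum_three_sq_of_not_four_dvd hs' hD'
  have hfour (k : ℕ) : (4 : ℤ) ^ k = (2 ^ k) ^ 2 := by rw [pow_right_comm]; norm_num
  have hscale : ((4 ^ i * s' : ℕ) : ℤ) * ((4 ^ j * D' : ℕ) * t ^ 2 - (2 ^ j * x) ^ 2) =
      (2 ^ i * 2 ^ j) ^ 2 * (s' * (D' * t ^ 2 - x ^ 2)) := by
    push_cast
    rw [hfour i, hfour j]
    ring
  refine ⟨t, 2 ^ j * x, ?_, 2 ^ i * 2 ^ j * a, 2 ^ i * 2 ^ j * b, 2 ^ i * 2 ^ j * c, ?_⟩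
  · rw [hscale]
    positivity
  · rw [hscale, habc]
    ring

/-- For `s` square-free positive and `m` positive, there exist integers `t₁, x₁` with
`s((4m+1)t₁² - x₁²)` positive and a sum of three integer squares. -/
theorem stmt_10 (s m : ℕ) (hs : Squarefree s) (hs' : 0 < s) (hm : 0 < m) :
    ∃ t₁ x₁ : ℤ, 0 < (s : ℤ) * ((4 * m + 1) * t₁ ^ 2 - x₁ ^ 2) ∧
      ∃ a b c : ℤ, (s : ℤ) * ((4 * m + 1) * t₁ ^ 2 - x₁ ^ 2) = a ^ 2 + b ^ 2 + c ^ 2 :=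
  mod_cast stmt_10_general s (4 * m + 1) hs' (by lia)
end
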